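/- arXiv:2008.05177 — 2 statements merged into one kernel-verified Lean document; each statement's English description precedes it below -/
import Mathlib

section
/- Fix probabilities w_1,...,w_M ≥ 0 with ∑ w_i = 1 and another probability vector v_1,...,v_M ≥ 0 with ∑ v_i = 1. If W̃ takes value w_i with probability π_i = φ w_i + (1-φ) v_i, where the v_i are exchangeable random variables independent of the w_i, then E[M·W̃ - 1 | w_1,...,w_M] = φ(M·w^{(2)} - 1), the same as under uniform noise. -/
open MeasureTheory

/-!
The scores `M wᵢ - 1` sum to zero, so noise whose components share one mean contributes nothing to
the expectation; the remaining part of the mixture contributes `φ ∑ wᵢ (M wᵢ - 1)`. For exchangeable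
noise, the means agree because a transposition carries any component to any other.
-/

open ProbabilityTheory

section RandomVector

variable {Ω ι : Type*} [MeasurableSpace Ω] {P : Measure Ω}

lemma identDistrib_of_map_reindex_eq {E : Type*} [MeasurableSpace E] {v : ι → Ω → E}
    (hv : ∀ i, Measurable (v i)) {σ : ι → ι}
    (hσ : P.map (fun ω i ↦ v (σ i) ω) = P.map (fun ω i ↦ v i ω)) (i : ι) :
    IdentDistrib (v (σ i)) (v i) P P :=
  have joint : IdentDistrib (fun ω i ↦ v (σ i) ω) (fun ω i ↦ v i ω) P P :=
    { aemeasurable_fst := (measurable_pi_lambda _ fun k ↦ hv (σ k)).aemeasurable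
      aemeasurable_snd := (measurable_pi_lambda _ hv).aemeasurable
      map_eq := hσ }
  joint.comp (measurable_pi_apply i)

lemma integrable_of_integrable_sum_of_nonneg {s : Finset ι} {v : ι → Ω → ℝ}
    (hv0 : ∀ i ∈ s, 0 ≤ᵐ[P] v i) (hsum : Integrable (fun ω ↦ ∑ i ∈ s, v i ω) P)
    {i : ι} (hi : i ∈ s) (hmeas : AEStronglyMeasurable (v i) P) : Integrable (v i) P := by
  refine hsum.mono' hmeas ?_
  filter_upwards [(Finset.eventually_all s).2 hv0] with ω hω
  rw [Real.norm_of_nonneg (hω i hi)]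
  exact Finset.single_le_sum hω hi

lemma integral_sum_affine_mul [IsProbabilityMeasure P] {s : Finset ι} {v : ι → Ω → ℝ}
    (hv : ∀ i ∈ s, Integrable (v i) P) (a x : ι → ℝ) (b : ℝ) :
    ∫ ω, ∑ i ∈ s, (a i + b * v i ω) * x i ∂P = ∑ i ∈ s, (a i + b * ∫ ω, v i ω ∂P) * x i := by
  have affine_integrable (i) (hi : i ∈ s) : Integrable (fun ω ↦ a i + b * v i ω) P :=
    (integrable_const _).add ((hv i hi).const_mul b)
  rw [integral_finsetSum _ fun i hi ↦ (affine_integrable i hi).mul_const _]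
  refine Finset.sum_congr rfl fun i hi ↦ ?_
  rw [integral_mul_const, integral_add (integrable_const _) ((hv i hi).const_mul b),
    integral_const_mul, integral_const, probReal_univ, one_smul]

end RandomVector

section Score

variable {ι R : Type*} [Fintype ι] [CommRing R] {w : ι → R}

lemma sum_card_mul_sub_one_eq_zero (hw : ∑ i, w i = 1) :
    ∑ i, ((Fintype.card ι : R) * w i - 1) = 0 := by
  simp [Finset.sum_sub_distrib, ← Finset.mul_sum, hw]

lemma sum_mul_mul_sub_one (hw : ∑ i, w i = 1) (m : R) :
    ∑ i, w i * (m * w i - 1) = m * ∑ i, w i ^ 2 - 1 := by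
  calc ∑ i, w i * (m * w i - 1) = ∑ i, (m * w i ^ 2 - w i) :=
        Finset.sum_congr rfl fun i _ ↦ by ring
    _ = m * ∑ i, w i ^ 2 - 1 := by rw [Finset.sum_sub_distrib, ← Finset.mul_sum, hw]

end Score

theorem google_estimator_robust_general {Ω ι : Type*} [MeasurableSpace Ω] [Fintype ι]
    {P : Measure Ω} [IsProbabilityMeasure P] (φ : ℝ) {w : ι → ℝ} (hw : ∑ i, w i = 1)
    {v : ι → Ω → ℝ} (hv : ∀ i, Integrable (v i) P) {c : ℝ} (hmean : ∀ i, ∫ ω, v i ω ∂P = c) :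
    ∫ ω, ∑ i, (φ * w i + (1 - φ) * v i ω) * ((Fintype.card ι : ℝ) * w i - 1) ∂P
      = φ * ((Fintype.card ι : ℝ) * ∑ i, w i ^ 2 - 1) := by
  set score : ι → ℝ := fun i ↦ Fintype.card ι * w i - 1
  calc ∫ ω, ∑ i, (φ * w i + (1 - φ) * v i ω) * score i ∂P
      = ∑ i, (φ * w i + (1 - φ) * c) * score i := by
        simp only [integral_sum_affine_mul fun i _ ↦ hv i, hmean]
    _ = φ * ∑ i, w i * score i + (1 - φ) * c * ∑ i, score i := by
        simp only [add_mul, Finset.sum_add_distrib, Finset.mul_sum, mul_assoc]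
    _ = φ * (Fintype.card ι * ∑ i, w i ^ 2 - 1) := by
        rw [sum_mul_mul_sub_one hw, sum_card_mul_sub_one_eq_zero hw, mul_zero, add_zero]

/-- Robustness of Google's estimator: with fixed probabilities `w_i` and an exchangeable
random probability vector `(v_i)` (independent of the fixed `w`'s), if `W̃` takes value
`w_i` with probability `φ w_i + (1-φ) v_i`, then the conditional expectation of
`M W̃ - 1` given the `w`'s equals `φ (M w⁽²⁾ - 1)`, the same as under uniform noise. -/
theorem google_estimator_robust {Ω : Type*} [MeasurableSpace Ω] (P : Measure Ω)
    [IsProbabilityMeasure P] (M : ℕ) (hM : 1 ≤ M) (φ : ℝ) (hφ : φ ∈ Set.Icc (0 : ℝ) 1)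
    (w : Fin M → ℝ) (hw0 : ∀ i, 0 ≤ w i) (hw1 : ∑ i, w i = 1)
    (v : Fin M → Ω → ℝ) (hvmeas : ∀ i, Measurable (v i))
    (hv0 : ∀ i ω, 0 ≤ v i ω) (hv1 : ∀ ω, ∑ i, v i ω = 1)
    (hexch : ∀ σ : Equiv.Perm (Fin M),
      Measure.map (fun ω (i : Fin M) => v (σ i) ω) P
        = Measure.map (fun ω (i : Fin M) => v i ω) P) :
    ∫ ω, ∑ i, (φ * w i + (1 - φ) * v i ω) * ((M : ℝ) * w i - 1) ∂P
      = φ * ((M : ℝ) * ∑ i, (w i) ^ 2 - 1) := by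
  have v_integrable (i : Fin M) : Integrable (v i) P :=
    integrable_of_integrable_sum_of_nonneg (fun j _ ↦ .of_forall (hv0 j))
      (by simp only [hv1, integrable_const]) (Finset.mem_univ i) (hvmeas i).aestronglyMeasurable
  have v_mean_eq (i j : Fin M) : ∫ ω, v i ω ∂P = ∫ ω, v j ω ∂P := by
    simpa only [Equiv.swap_apply_right] using
      (identDistrib_of_map_reindex_eq hvmeas (hexch (Equiv.swap i j)) j).integral_eq
  simpa only [Fintype.card_fin] using
    google_estimator_robust_general φ hw1 v_integrable fun i ↦ v_mean_eq i ⟨0, hM⟩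
end

section
/- Fix x ∈ {0,1}^n, let (w_y)_{y ∈ {0,1}^n} ~ Dirichlet(1,...,1) with M = 2^n, and let B_q(y) = q^{|y|}(1-q)^{n-|y|}. Then M² E[(∑_{y ≠ 0} w_{x⊕y} B_q(y))²] = (M/(M+1)) · {[q² + (1-q)²]^n - 2(1-q)^n + 1}. -/
open MeasureTheory
open scoped ENNReal

/-- The Dirichlet(1,...,1) distribution on `Fin M → ℝ`, i.e. the uniform probability
distribution on the standard `(M-1)`-dimensional simplex, obtained as the pushforward of the
normalized Lebesgue measure on `{x : Fin (M-1) → ℝ | x ≥ 0, ∑ x ≤ 1}` under the map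
appending the last coordinate `1 - ∑ x`. -/
noncomputable def stdSimplexUniform (M : ℕ) : Measure (Fin M → ℝ) :=
  Measure.map
    (fun (x : Fin (M - 1) → ℝ) (i : Fin M) =>
      if h : (i : ℕ) < M - 1 then x ⟨i, h⟩ else 1 - ∑ j, x j)
    ((Nat.factorial (M - 1) : ℝ≥0∞) •
      volume.restrict {x : Fin (M - 1) → ℝ | (∀ i, 0 ≤ x i) ∧ ∑ i, x i ≤ 1})

/-- Hamming weight of a bitstring `y : Fin n → Bool`. -/
def hammingWt {n : ℕ} (y : Fin n → Bool) : ℕ :=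
  (Finset.univ.filter fun i => y i = true).card

/-- The Dirichlet(1,...,1) distribution indexed by bitstrings in `{0,1}^n`, `M = 2^n`,
obtained by transporting `stdSimplexUniform (2^n)` along an equivalence
`(Fin n → Bool) ≃ Fin (2^n)` (the uniform distribution on the simplex is
permutation-invariant, so the choice of equivalence is immaterial). -/
noncomputable def bitstringDirichlet (n : ℕ) : Measure ((Fin n → Bool) → ℝ) :=
  Measure.map
    (fun (w : Fin (2 ^ n) → ℝ) (y : Fin n → Bool) =>
      w ((Fintype.equivFinOfCardEq (by simp [Fintype.card_fun]) : (Fin n → Bool) ≃ Fin (2 ^ n)) y))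
    (stdSimplexUniform (2 ^ n))

/-!
Slicing a solid simplex by its first coordinate reduces Dirichlet's integral
`∫ ∏ xᵢ ^ kᵢ * (t - ∑ xᵢ) ^ l` in dimension `m + 1` to the same integral in dimension `m` times a
Beta integral, so all monomial moments of the uniform distribution on the simplex are explicit. In
particular `E[w_a w_b] = (1 + [a = b]) / (M (M + 1))`, hence any linear form satisfies
`E[(∑ cᵢ wᵢ)²] = ((∑ cᵢ)² + ∑ cᵢ²) / (M (M + 1))`. For the readout weights `B_q(y)`, `y ≠ 0`, the
binomial theorem over bitstrings evaluates both sums; the translation by `x` merely permutes the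
indices, and second moments only distinguish equal from unequal indices.
-/

section CornerSimplex

/-- The solid simplex `{x ≥ 0, ∑ x ≤ t}`. The size `t` is a parameter because the slice of such a
simplex at first coordinate `s` is a simplex of size `t - s`, which is what inductions on the
dimension need. -/
def cornerSimplex (ι : Type*) [Fintype ι] (t : ℝ) : Set (ι → ℝ) :=
  {x | (∀ i, 0 ≤ x i) ∧ ∑ i, x i ≤ t}

variable {ι : Type*} [Fintype ι]

theorem isCompact_cornerSimplex (t : ℝ) : IsCompact (cornerSimplex ι t) := by
  have closed : IsClosed (cornerSimplex ι t) :=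
    (isClosed_Ici (a := (0 : ι → ℝ))).inter
      (isClosed_le (f := fun x : ι → ℝ => ∑ i, x i) (by fun_prop) continuous_const)
  refine (isCompact_Icc (a := (0 : ι → ℝ)) (b := fun _ => t)).of_isClosed_subset closed ?_
  exact fun x hx => ⟨hx.1, fun i =>
    (Finset.single_le_sum (fun j _ => hx.1 j) (Finset.mem_univ i)).trans hx.2⟩

theorem measurableSet_cornerSimplex (t : ℝ) : MeasurableSet (cornerSimplex ι t) :=
  (isCompact_cornerSimplex t).measurableSet

theorem cornerSimplex_of_isEmpty [IsEmpty ι] {t : ℝ} (ht : 0 ≤ t) :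
    cornerSimplex ι t = Set.univ := by
  simp [cornerSimplex, ht]

theorem cons_mem_cornerSimplex {m : ℕ} {s t : ℝ} {y : Fin m → ℝ} :
    (Fin.cons s y : Fin (m + 1) → ℝ) ∈ cornerSimplex (Fin (m + 1)) t ↔
      s ∈ Set.Icc 0 t ∧ y ∈ cornerSimplex (Fin m) (t - s) := by
  simp only [cornerSimplex, Set.mem_ofPred_eq, Fin.forall_fin_succ, Fin.sum_univ_succ,
    Fin.cons_zero, Fin.cons_succ, Set.mem_Icc, le_sub_iff_add_le']
  constructor
  · rintro ⟨⟨hs, hy⟩, hsum⟩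
    have : 0 ≤ ∑ i, y i := Finset.sum_nonneg fun i _ => hy i
    exact ⟨⟨hs, by linarith⟩, hy, hsum⟩
  · rintro ⟨⟨hs, -⟩, hy, hsum⟩
    exact ⟨⟨hs, hy⟩, hsum⟩

theorem setIntegral_cornerSimplex_succ {E : Type*} [NormedAddCommGroup E] [NormedSpace ℝ E]
    {m : ℕ} {t : ℝ} {f : (Fin (m + 1) → ℝ) → E}
    (hf : IntegrableOn f (cornerSimplex (Fin (m + 1)) t)) :
    ∫ x in cornerSimplex (Fin (m + 1)) t, f x =
      ∫ s in Set.Icc 0 t, ∫ y in cornerSimplex (Fin m) (t - s), f (Fin.cons s y) := by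
  classical
  let e := (MeasurableEquiv.piFinSuccAbove (fun _ : Fin (m + 1) => ℝ) 0).symm
  have he : MeasurePreserving e := (volume_preserving_piFinSuccAbove (fun _ => ℝ) 0).symm
  let F := (cornerSimplex (Fin (m + 1)) t).indicator f
  have hF : Integrable (F ∘ e) :=
    (he.integrable_comp_emb e.measurableEmbedding).2
      (hf.integrable_indicator (measurableSet_cornerSimplex t))
  have slice (s : ℝ) : ∫ y, F (e (s, y)) = (Set.Icc 0 t).indicator
      (fun s => ∫ y in cornerSimplex (Fin m) (t - s), f (Fin.cons s y)) s := by
    have e_apply (y : Fin m → ℝ) : e (s, y) = (Fin.cons s y : Fin (m + 1) → ℝ) := by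
      simp [e, MeasurableEquiv.piFinSuccAbove_symm_apply, Fin.insertNthEquiv]
    by_cases hs : s ∈ Set.Icc 0 t
    · rw [Set.indicator_of_mem hs, ← integral_indicator (measurableSet_cornerSimplex _)]
      simp only [F, e_apply, Set.indicator_apply, cons_mem_cornerSimplex, hs, true_and]
    · simp [F, e_apply, cons_mem_cornerSimplex, hs]
  calc ∫ x in cornerSimplex (Fin (m + 1)) t, f x
      = ∫ x, F x := (integral_indicator (measurableSet_cornerSimplex t)).symm
    _ = ∫ p, F (e p) := (he.integral_comp' F).symm
    _ = ∫ s, ∫ y, F (e (s, y)) := integral_prod _ hF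
    _ = ∫ s in Set.Icc 0 t, ∫ y in cornerSimplex (Fin m) (t - s), f (Fin.cons s y) := by
      simp only [slice, integral_indicator measurableSet_Icc]

end CornerSimplex

section DirichletIntegral

open scoped Nat

theorem integral_pow_mul_sub_pow (k l : ℕ) {t : ℝ} (ht : 0 ≤ t) :
    ∫ s in (0 : ℝ)..t, s ^ k * (t - s) ^ l =
      k ! * l ! / (k + l + 1)! * t ^ (k + l + 1) := by
  rcases ht.eq_or_lt with rfl | ht
  · simp
  have beta : Complex.betaIntegral (k + 1) (l + 1) = k ! * l ! / (k + l + 1)! := by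
    rw [Complex.betaIntegral_eq_Gamma_mul_div _ _ (by norm_cast; omega) (by norm_cast; omega),
      Complex.Gamma_nat_eq_factorial, Complex.Gamma_nat_eq_factorial,
      ← Complex.Gamma_nat_eq_factorial (k + l + 1)]
    push_cast
    ring_nf
  have scaled := Complex.betaIntegral_scaled (k + 1) (l + 1) ht
  have exponent : (k + 1 + (l + 1) - 1 : ℂ) = (k + l + 1 : ℕ) := by push_cast; ring
  simp only [beta, exponent, add_sub_cancel_right, Complex.cpow_natCast] at scaled
  rw [mul_comm (_ / _)]
  apply Complex.ofReal_injective
  rw [← intervalIntegral.integral_ofReal]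
  push_cast
  exact scaled

/-- `(t - ∑ x) ^ l` is the power of the last barycentric coordinate; it is unchanged by slicing,
which leaves a Beta integral over the first coordinate. -/
theorem setIntegral_cornerSimplex_prod_pow {m : ℕ} (k : Fin m → ℕ) (l : ℕ) {t : ℝ} (ht : 0 ≤ t) :
    ∫ x in cornerSimplex (Fin m) t, (∏ i, x i ^ k i) * (t - ∑ i, x i) ^ l =
      (∏ i, ((k i)! : ℝ)) * l ! / (m + ∑ i, k i + l)! * t ^ (m + ∑ i, k i + l) := by
  induction m generalizing t with
  | zero =>
    have : (l ! : ℝ) ≠ 0 := by positivity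
    simp [cornerSimplex_of_isEmpty ht, integral_unique, Measure.real, volume_pi, this]
  | succ m ih =>
    let N := m + ∑ i : Fin m, k i.succ + l
    let C : ℝ := (∏ i : Fin m, ((k i.succ)! : ℝ)) * l ! / (N !)
    have slice (s : ℝ) (hs : s ∈ Set.Icc 0 t) :
        ∫ y in cornerSimplex (Fin m) (t - s),
          (∏ i, (Fin.cons s y : Fin (m + 1) → ℝ) i ^ k i) *
            (t - ∑ i, (Fin.cons s y : Fin (m + 1) → ℝ) i) ^ l =
          C * (s ^ k 0 * (t - s) ^ N) := by
      simp only [Fin.prod_univ_succ, Fin.sum_univ_succ, Fin.cons_zero, Fin.cons_succ, mul_assoc,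
        ← sub_sub]
      rw [integral_const_mul, ih (fun i => k i.succ) (sub_nonneg.2 hs.2)]
      ring
    rw [setIntegral_cornerSimplex_succ
        ((by fun_prop : Continuous _).continuousOn.integrableOn_compact
          (isCompact_cornerSimplex t)),
      setIntegral_congr_fun measurableSet_Icc slice, integral_Icc_eq_integral_Ioc,
      ← intervalIntegral.integral_of_le ht, intervalIntegral.integral_const_mul,
      integral_pow_mul_sub_pow _ _ ht]
    have degree : k 0 + N + 1 = m + 1 + ∑ i, k i + l := by
      simp only [N, Fin.sum_univ_succ]
      ring
    have : (N ! : ℝ) ≠ 0 := by positivity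
    rw [degree, Fin.prod_univ_succ]
    simp only [C]
    field_simp

end DirichletIntegral

section StdSimplexUniform

open scoped Nat

/-- The affine chart of the standard simplex that fills in the last coordinate so that the
coordinates sum to `1`. -/
def simplexChart {m : ℕ} (x : Fin m → ℝ) : Fin (m + 1) → ℝ :=
  Fin.snoc x (1 - ∑ i, x i)

theorem continuous_simplexChart {m : ℕ} : Continuous (simplexChart (m := m)) := by
  unfold simplexChart
  fun_prop

theorem stdSimplexUniform_succ (m : ℕ) :
    stdSimplexUniform (m + 1) = Measure.map simplexChart
      ((m ! : ℝ≥0∞) • volume.restrict (cornerSimplex (Fin m) 1)) :=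
  rfl

theorem integrable_stdSimplexUniform {E : Type*} [NormedAddCommGroup E] {M : ℕ} [NeZero M]
    {f : (Fin M → ℝ) → E} (hf : Continuous f) : Integrable f (stdSimplexUniform M) := by
  obtain ⟨m, rfl⟩ := Nat.exists_eq_succ_of_ne_zero (NeZero.ne M)
  rw [stdSimplexUniform_succ, integrable_map_measure hf.aestronglyMeasurable
    continuous_simplexChart.aemeasurable]
  exact ((hf.comp continuous_simplexChart).continuousOn.integrableOn_compact
    (isCompact_cornerSimplex 1)).smul_measure (ENNReal.natCast_ne_top _)

theorem integral_stdSimplexUniform_succ {E : Type*} [NormedAddCommGroup E] [NormedSpace ℝ E]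
    {m : ℕ} {f : (Fin (m + 1) → ℝ) → E}
    (hf : AEStronglyMeasurable f (stdSimplexUniform (m + 1))) :
    ∫ w, f w ∂stdSimplexUniform (m + 1) =
      (m ! : ℝ) • ∫ x in cornerSimplex (Fin m) 1, f (simplexChart x) := by
  rw [stdSimplexUniform_succ] at hf ⊢
  rw [integral_map continuous_simplexChart.aemeasurable hf, integral_smul_measure,
    ENNReal.toReal_natCast]

theorem integral_prod_pow_stdSimplexUniform {m : ℕ} (k : Fin (m + 1) → ℕ) :
    ∫ w, ∏ i, w i ^ k i ∂stdSimplexUniform (m + 1) =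
      m ! * (∏ i, ((k i)! : ℝ)) / (m + ∑ i, k i)! := by
  rw [integral_stdSimplexUniform_succ (by fun_prop : Continuous _).aestronglyMeasurable]
  simp only [simplexChart, Fin.prod_univ_castSucc, Fin.snoc_castSucc, Fin.snoc_last,
    setIntegral_cornerSimplex_prod_pow _ _ zero_le_one, one_pow, mul_one, smul_eq_mul,
    Fin.sum_univ_castSucc, ← add_assoc, mul_div_assoc]

theorem integral_mul_stdSimplexUniform {M : ℕ} (a b : Fin M) :
    ∫ w, w a * w b ∂stdSimplexUniform M = (if a = b then 2 else 1) / (M * (M + 1) : ℝ) := by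
  obtain ⟨m, rfl⟩ := Nat.exists_eq_succ_of_ne_zero a.pos.ne'
  let k : Fin (m + 1) → ℕ := fun i => (if a = i then 1 else 0) + if b = i then 1 else 0
  have monomial (w : Fin (m + 1) → ℝ) : w a * w b = ∏ i, w i ^ k i := by
    simp only [k, pow_add, Finset.prod_mul_distrib, Finset.prod_pow_boole, Finset.mem_univ, if_true]
  have degree : ∑ i, k i = 2 := by simp [k, Finset.sum_add_distrib]
  have factorials : ∏ i, ((k i)! : ℝ) = if a = b then 2 else 1 := by
    rw [Finset.prod_eq_single a]
    · split_ifs with h <;> simp [k, h, Ne.symm]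
    · intro i _ hi
      by_cases hib : b = i <;> simp [k, hi.symm, hib]
    · simp
  simp only [monomial, integral_prod_pow_stdSimplexUniform, degree, factorials,
    Nat.factorial_succ (m + 1), Nat.factorial_succ m]
  push_cast
  field_simp

end StdSimplexUniform

section BitstringDirichlet

variable {n : ℕ}

theorem exists_bitstringDirichlet_eq_map (n : ℕ) : ∃ e : (Fin n → Bool) ≃ Fin (2 ^ n),
    bitstringDirichlet n = Measure.map (fun w => w ∘ e) (stdSimplexUniform (2 ^ n)) :=
  ⟨_, rfl⟩

theorem integrable_bitstringDirichlet {E : Type*} [NormedAddCommGroup E]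
    {f : ((Fin n → Bool) → ℝ) → E} (hf : Continuous f) :
    Integrable f (bitstringDirichlet n) := by
  obtain ⟨e, he⟩ := exists_bitstringDirichlet_eq_map n
  have comp : Continuous fun w : Fin (2 ^ n) → ℝ => w ∘ e := by fun_prop
  rw [he, integrable_map_measure hf.aestronglyMeasurable comp.aemeasurable]
  exact integrable_stdSimplexUniform (hf.comp comp)

theorem integral_mul_bitstringDirichlet (a b : Fin n → Bool) :
    ∫ w, w a * w b ∂bitstringDirichlet n =
      (if a = b then 2 else 1) / (2 ^ n * (2 ^ n + 1) : ℝ) := by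
  obtain ⟨e, he⟩ := exists_bitstringDirichlet_eq_map n
  rw [he, integral_map (by fun_prop : Continuous _).aemeasurable
    (by fun_prop : Continuous _).aestronglyMeasurable]
  simp [integral_mul_stdSimplexUniform]

theorem integral_sq_sum_mul_bitstringDirichlet {ι : Type*} (s : Finset ι)
    {g : ι → Fin n → Bool} (hg : Set.InjOn g s) (c : ι → ℝ) :
    ∫ w, (∑ i ∈ s, w (g i) * c i) ^ 2 ∂bitstringDirichlet n =
      ((∑ i ∈ s, c i) ^ 2 + ∑ i ∈ s, c i ^ 2) / (2 ^ n * (2 ^ n + 1)) := by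
  classical
  have moment (i : ι) (hi : i ∈ s) (j : ι) (hj : j ∈ s) :
      ∫ w, w (g i) * c i * (w (g j) * c j) ∂bitstringDirichlet n =
        (c i * c j + if i = j then c i * c j else 0) / (2 ^ n * (2 ^ n + 1)) := by
    simp only [mul_mul_mul_comm _ (c i) _ (c j), integral_mul_const,
      integral_mul_bitstringDirichlet, hg.eq_iff hi hj]
    split_ifs <;> ring
  calc ∫ w, (∑ i ∈ s, w (g i) * c i) ^ 2 ∂bitstringDirichlet n
      = ∑ i ∈ s, ∑ j ∈ s, ∫ w, w (g i) * c i * (w (g j) * c j) ∂bitstringDirichlet n := by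
        simp only [sq, Finset.sum_mul_sum]
        rw [integral_finsetSum _ fun i _ => integrable_bitstringDirichlet (by fun_prop)]
        refine Finset.sum_congr rfl fun i _ => ?_
        exact integral_finsetSum _ fun j _ => integrable_bitstringDirichlet (by fun_prop)
    _ = ∑ i ∈ s, ∑ j ∈ s,
          (c i * c j + if i = j then c i * c j else 0) / (2 ^ n * (2 ^ n + 1)) :=
        Finset.sum_congr rfl fun i hi => Finset.sum_congr rfl fun j hj => moment i hi j hj
    _ = ((∑ i ∈ s, c i) ^ 2 + ∑ i ∈ s, c i ^ 2) / (2 ^ n * (2 ^ n + 1)) := by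
        simp only [← Finset.sum_div, Finset.sum_add_distrib, Finset.sum_ite_eq, sq,
          Finset.sum_mul_sum]
        congr 2
        exact Finset.sum_congr rfl fun i hi => if_pos hi

end BitstringDirichlet

section HammingWeight

variable {R : Type*} {n : ℕ}

theorem sum_pow_hammingWt_mul_pow [CommSemiring R] (a b : R) :
    ∑ y : Fin n → Bool, a ^ hammingWt y * b ^ (n - hammingWt y) = (a + b) ^ n := by
  rw [← Fin.sum_pow_mul_eq_add_pow]
  exact Finset.sum_nbij' (fun y => Finset.univ.filter fun i => y i = true)
    (fun s i => decide (i ∈ s)) (by simp) (by simp) (by simp) (by simp) (by simp [hammingWt])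

theorem sum_ne_zero_pow_hammingWt_mul_pow [CommRing R] (a b : R) :
    ∑ y : Fin n → Bool with y ≠ fun _ => false, a ^ hammingWt y * b ^ (n - hammingWt y) =
      (a + b) ^ n - b ^ n := by
  rw [Finset.filter_ne', Finset.sum_erase_eq_sub (Finset.mem_univ _), sum_pow_hammingWt_mul_pow]
  simp [hammingWt]

theorem sum_ne_zero_sq_pow_hammingWt_mul_pow [CommRing R] (a b : R) :
    ∑ y : Fin n → Bool with y ≠ fun _ => false, (a ^ hammingWt y * b ^ (n - hammingWt y)) ^ 2 =
      (a ^ 2 + b ^ 2) ^ n - (b ^ n) ^ 2 := by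
  simp only [mul_pow, pow_right_comm _ _ 2, sum_ne_zero_pow_hammingWt_mul_pow]

end HammingWeight

theorem readout_noise_second_moment_general (n : ℕ) (q : ℝ) (x : Fin n → Bool) :
    ((2 : ℝ) ^ n) ^ 2 *
      ∫ w, (∑ y ∈ Finset.univ.filter (fun y : Fin n → Bool => y ≠ fun _ => false),
          w (fun i => xor (x i) (y i)) * (q ^ hammingWt y * (1 - q) ^ (n - hammingWt y))) ^ 2
        ∂(bitstringDirichlet n)
      = ((2 : ℝ) ^ n / ((2 : ℝ) ^ n + 1)) *
          ((q ^ 2 + (1 - q) ^ 2) ^ n - 2 * (1 - q) ^ n + 1) := by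
  have xor_injective : Function.Injective fun (y : Fin n → Bool) i => xor (x i) (y i) :=
    fun y z h => funext fun i => Bool.xor_right_inj.1 (congrFun h i)
  rw [integral_sq_sum_mul_bitstringDirichlet _ xor_injective.injOn,
    sum_ne_zero_pow_hammingWt_mul_pow, sum_ne_zero_sq_pow_hammingWt_mul_pow, add_sub_cancel,
    one_pow]
  field_simp
  ring

/-- Key readout-error computation: for fixed `x ∈ {0,1}^n`, with
`(w_y) ~ Dirichlet(1,...,1)` (`M = 2^n`) and `B_q(y) = q^{|y|}(1-q)^{n-|y|}`,
`M² E[(∑_{y ≠ 0} w_{x ⊕ y} B_q(y))²] = (M/(M+1)) ([q² + (1-q)²]^n - 2(1-q)^n + 1)`. -/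
theorem readout_noise_second_moment (n : ℕ) (hn : 1 ≤ n) (q : ℝ) (hq : q ∈ Set.Ioo (0 : ℝ) 1)
    (x : Fin n → Bool) :
    ((2 : ℝ) ^ n) ^ 2 *
      ∫ w, (∑ y ∈ Finset.univ.filter (fun y : Fin n → Bool => y ≠ fun _ => false),
          w (fun i => xor (x i) (y i)) * (q ^ hammingWt y * (1 - q) ^ (n - hammingWt y))) ^ 2
        ∂(bitstringDirichlet n)
      = ((2 : ℝ) ^ n / ((2 : ℝ) ^ n + 1)) *
          ((q ^ 2 + (1 - q) ^ 2) ^ n - 2 * (1 - q) ^ n + 1) :=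
  readout_noise_second_moment_general n q x
end
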